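/- arXiv:2510.25400 — 2 statements merged into one kernel-verified Lean document; each statement's English description precedes it below -/
import Mathlib

section
/- Fix λ ≥ 1 and λ_j ≥ 0, and let Ñ_j be a random variable with Ñ_j ~ Poisson(λ_j/2). Let W^{(λ)} = W/λ where W is a nonnegative random variable with tail P(W ≥ t²) = e^{-t/14} for all t ≥ 0. Then the random variable V_j^{(λ)} = (λ_j²/λ) · 1{Ñ_j ≤ λ_j/4} is stochastically dominated by W^{(λ)}: for every real w, P(V_j^{(λ)} ≥ w) ≤ P(W^{(λ)} ≥ w). -/
open MeasureTheory
open scoped ENNReal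

/-!
Write `V = (λ_j² / λ) · 1{N ≤ λ_j / 4}`. For `w ≤ 0` the event `w ≤ W / λ` is certain, and for
`w > λ_j² / λ` the event `w ≤ V` is empty. In between, the event `w ≤ V` is just `N ≤ λ_j / 4`,
while the event `w ≤ W / λ` only shrinks when `w` is increased to `λ_j² / λ`. So it
suffices to bound `P(N ≤ λ_j / 4)` by `P(W ≥ λ_j²) = exp (-λ_j / 14)`. As `λ_j / 4` is half of the
mean of `N`, Chernoff's method at the exponent `log (1 / 2)` gives
`P(N ≤ λ_j / 4) ≤ exp (-(1 - log 2) * λ_j / 4)`, which is enough because `log 2 < 5 / 7`.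
-/

open ProbabilityTheory
open scoped NNReal

section Measure

variable {Ω Ω' α : Type*} [MeasurableSpace Ω] [MeasurableSpace Ω']

theorem measure_preimage_le_of_forall_singleton [Countable α] [MeasurableSpace α]
    [MeasurableSingletonClass α] {μ : Measure Ω} {P : Measure α} {X : Ω → α}
    (h : ∀ a, μ (X ⁻¹' {a}) ≤ P {a}) (s : Set α) : μ (X ⁻¹' s) ≤ P s :=
  calc
    μ (X ⁻¹' s) = μ (⋃ a ∈ s, X ⁻¹' {a}) := by rw [Set.biUnion_preimage_singleton]
    _ ≤ ∑' a : s, μ (X ⁻¹' {a.1}) := measure_biUnion_le μ s.to_countable _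
    _ ≤ ∑' a : s, P {a.1} := ENNReal.tsum_le_tsum fun a ↦ h a
    _ = P s := by
      rw [← measure_biUnion s.to_countable (fun _ _ _ _ hab ↦ by simpa using hab)
        (fun a _ ↦ measurableSet_singleton a), Set.biUnion_of_singleton]

theorem measure_le_mul_ite_le_of_measure_le (μ : Measure Ω) [IsProbabilityMeasure μ]
    {ν : Measure Ω'} [IsProbabilityMeasure ν] {p : Ω → Prop} [DecidablePred p] {Y : Ω' → ℝ}
    (hY : ∀ ω, 0 ≤ Y ω) {c : ℝ} (h : μ {ω | p ω} ≤ ν {ω | c ≤ Y ω}) (w : ℝ) :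
    μ {ω | w ≤ c * if p ω then 1 else 0} ≤ ν {ω | w ≤ Y ω} := by
  rcases le_or_gt w 0 with hw | hw
  · have hν : {ω | w ≤ Y ω} = Set.univ := Set.eq_univ_of_forall fun ω ↦ hw.trans (hY ω)
    rw [hν, measure_univ]
    exact prob_le_one
  have hp {ω} (hω : w ≤ c * if p ω then 1 else 0) : p ω ∧ w ≤ c := by
    by_cases hpω : p ω
    · simpa [hpω] using hω
    · simp [hpω, hw.not_ge] at hω
  by_cases hwc : w ≤ c
  · calc
      μ {ω | w ≤ c * if p ω then 1 else 0} ≤ μ {ω | p ω} := measure_mono fun _ hω ↦ (hp hω).1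
      _ ≤ ν {ω | c ≤ Y ω} := h
      _ ≤ ν {ω | w ≤ Y ω} := measure_mono fun _ hω ↦ hwc.trans hω
  · have hμ : {ω | w ≤ c * if p ω then 1 else 0} = ∅ :=
      Set.eq_empty_of_forall_notMem fun _ hω ↦ hwc (hp hω).2
    rw [hμ, measure_empty]
    exact zero_le

end Measure

section Poisson

theorem hasSum_poisson_mul_exp (r t : ℝ) :
    HasSum (fun n : ℕ ↦ Real.exp (-r) * r ^ n / n.factorial * Real.exp (t * n))
      (Real.exp (r * (Real.exp t - 1))) := by
  have h := (NormedSpace.expSeries_div_hasSum_exp (r * Real.exp t)).mul_left (Real.exp (-r))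
  rw [← Real.exp_eq_exp_ℝ, ← Real.exp_add] at h
  convert! h using 1
  · ext n
    rw [mul_pow, ← Real.exp_nat_mul, mul_comm t]
    ring
  · ring_nf

theorem integrable_exp_mul_natCast_poissonMeasure (r : ℝ≥0) (t : ℝ) :
    Integrable (fun n : ℕ ↦ Real.exp (t * n)) (poissonMeasure r) := by
  simpa only [integrable_poissonMeasure_iff, Real.norm_eq_abs, Real.abs_exp]
    using (hasSum_poisson_mul_exp r t).summable

theorem mgf_natCast_poissonMeasure (r : ℝ≥0) (t : ℝ) :
    mgf (fun n : ℕ ↦ (n : ℝ)) (poissonMeasure r) t = Real.exp (r * (Real.exp t - 1)) := by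
  simpa only [mgf, integral_poissonMeasure, smul_eq_mul]
    using (hasSum_poisson_mul_exp r t).tsum_eq

theorem poissonMeasure_real_natCast_le_mul_le (r : ℝ≥0) {δ : ℝ} (hδ₀ : 0 < δ) (hδ₁ : δ ≤ 1) :
    (poissonMeasure r).real {n | (n : ℝ) ≤ δ * r} ≤
      Real.exp (-(1 - δ + δ * Real.log δ) * r) := by
  refine (measure_le_le_exp_mul_mgf (δ * r) (Real.log_nonpos hδ₀.le hδ₁)
    (integrable_exp_mul_natCast_poissonMeasure r _)).trans_eq ?_
  rw [mgf_natCast_poissonMeasure, Real.exp_log hδ₀, ← Real.exp_add]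
  ring_nf

theorem poissonMeasure_real_natCast_le_half_le (r : ℝ≥0) :
    (poissonMeasure r).real {n | (n : ℝ) ≤ r / 2} ≤ Real.exp (-r / 7) := by
  have hrate : (1 / 7 : ℝ) ≤ 1 - 2⁻¹ + 2⁻¹ * Real.log 2⁻¹ := by
    rw [Real.log_inv]
    linarith [Real.log_two_lt_d9]
  calc
    (poissonMeasure r).real {n | (n : ℝ) ≤ r / 2}
        = (poissonMeasure r).real {n | (n : ℝ) ≤ 2⁻¹ * r} := by simp only [div_eq_inv_mul]
    _ ≤ Real.exp (-(1 - 2⁻¹ + 2⁻¹ * Real.log 2⁻¹) * r) :=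
      poissonMeasure_real_natCast_le_mul_le r (by norm_num) (by norm_num)
    _ ≤ Real.exp (-(1 / 7) * r) := by gcongr
    _ = Real.exp (-r / 7) := by ring_nf

end Poisson

theorem upper_envelope_general {Ω Ω' : Type*} [MeasurableSpace Ω] [MeasurableSpace Ω']
    (μ : Measure Ω) [IsProbabilityMeasure μ]
    (ν : Measure Ω') [IsProbabilityMeasure ν]
    (lam : ℝ) (hlam : 0 < lam)
    (lamj : ℝ) (hlamj : 0 ≤ lamj)
    (N : Ω → ℕ)
    (hpois : ∀ k : ℕ, μ {ω | N ω = k} =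
      ENNReal.ofReal (Real.exp (-(lamj / 2)) * (lamj / 2) ^ k / k.factorial))
    (W : Ω' → ℝ) (hWnn : ∀ ω, 0 ≤ W ω)
    (hWtail : ∀ t : ℝ, 0 ≤ t → ν {ω | t ^ 2 ≤ W ω} = ENNReal.ofReal (Real.exp (-t / 14))) :
    ∀ w : ℝ,
      μ {ω | w ≤ (lamj ^ 2 / lam) * (if (N ω : ℝ) ≤ lamj / 4 then 1 else 0)} ≤
        ν {ω | w ≤ W ω / lam} := by
  let r : ℝ≥0 := ⟨lamj / 2, by positivity⟩
  have hr : (r : ℝ) = lamj / 2 := rfl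
  have hhalf : lamj / 4 = r / 2 := by rw [hr]; ring
  have hexp : -lamj / 14 = -r / 7 := by rw [hr]; ring
  refine measure_le_mul_ite_le_of_measure_le μ (fun ω ↦ div_nonneg (hWnn ω) hlam.le) ?_
  calc
    μ {ω | (N ω : ℝ) ≤ lamj / 4}
        ≤ poissonMeasure r {n | (n : ℝ) ≤ lamj / 4} :=
      measure_preimage_le_of_forall_singleton
        (fun k ↦ ((hpois k).trans (poissonMeasure_singleton r k).symm).le) _
    _ ≤ ENNReal.ofReal (Real.exp (-lamj / 14)) := by
      rw [hhalf, hexp, ← ofReal_measureReal]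
      exact ENNReal.ofReal_le_ofReal (poissonMeasure_real_natCast_le_half_le r)
    _ = ν {ω | lamj ^ 2 ≤ W ω} := (hWtail lamj hlamj).symm
    _ = ν {ω | lamj ^ 2 / lam ≤ W ω / lam} := by simp only [div_le_div_iff_of_pos_right hlam]

theorem upper_envelope {Ω Ω' : Type*} [MeasurableSpace Ω] [MeasurableSpace Ω']
    (μ : Measure Ω) [IsProbabilityMeasure μ]
    (ν : Measure Ω') [IsProbabilityMeasure ν]
    (lam : ℝ) (hlam : 1 ≤ lam)
    (lamj : ℝ) (hlamj : 0 ≤ lamj)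
    (N : Ω → ℕ)
    (hpois : ∀ k : ℕ, μ {ω | N ω = k} =
      ENNReal.ofReal (Real.exp (-(lamj / 2)) * (lamj / 2) ^ k / k.factorial))
    (W : Ω' → ℝ) (hWnn : ∀ ω, 0 ≤ W ω)
    (hWtail : ∀ t : ℝ, 0 ≤ t → ν {ω | t ^ 2 ≤ W ω} = ENNReal.ofReal (Real.exp (-t / 14))) :
    ∀ w : ℝ,
      μ {ω | w ≤ (lamj ^ 2 / lam) * (if (N ω : ℝ) ≤ lamj / 4 then 1 else 0)} ≤
        ν {ω | w ≤ W ω / lam} :=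
  upper_envelope_general μ ν lam (by positivity) lamj hlamj N hpois W hWnn hWtail
end

section
/- Let d ≥ 1, let p be a real number with p ≥ √d, and set λ = p/√d. Let W_1^{(λ)}, …, W_d^{(λ)} be i.i.d. nonnegative random variables, each distributed as W/λ where W has tail P(W ≥ t²) = e^{-t/14} for all t ≥ 0. Then ‖Σ_{j=1}^d W_j^{(λ)}‖_p ≤ 91190 √d · p. -/
/-!
For nonnegative `Y i`, the inequality `1 + ∑ Y i ≤ ∏ (1 + Y i)` and independence bound the `p`-th
moment of `∑ Y i` by the product of the `p`-th moments of the `1 + Y i`. The tail assumption says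
that `X = √(λ W) / 14` has tail `e^{-t}`. For such `X`, the variable `Y = (X / (6 p))²` satisfies
`(1 + Y)^p ≤ 1 + e^{X / 2} / (2 p)` and `E[e^{X / 2}] ≤ 2`, so `E[(1 + Y)^p] ≤ 1 + 1 / p`. Hence `d`
summands contribute at most `(1 + 1 / p)^d ≤ e^{d / p}`, whose `p`-th root `e^{d / p²}` is at most
`e` as soon as `d ≤ p²`.
-/

open MeasureTheory ProbabilityTheory Finset
open scoped ENNReal

/-- The `L^p` norm `‖Z‖_p = (E[|Z|^p])^{1/p}` of a real random variable,
for a real exponent `p`. -/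
noncomputable def lpNormR {Ω : Type*} [MeasurableSpace Ω] (μ : Measure Ω) (p : ℝ)
    (Z : Ω → ℝ) : ℝ≥0∞ :=
  (∫⁻ ω, ENNReal.ofReal (|Z ω| ^ p) ∂μ) ^ (1 / p)

section RealInequalities

lemma one_add_sq_le_exp {u : ℝ} (hu : 0 ≤ u) : 1 + u ^ 2 ≤ Real.exp u := by
  have h_taylor := Real.sum_le_exp_of_nonneg hu 4
  norm_num [Finset.sum_range_succ, Nat.factorial] at h_taylor
  nlinarith [mul_nonneg hu (sq_nonneg (u - 3 / 2))]

lemma one_add_rpow_le {p v : ℝ} (hp : 0 ≤ p) (hv : 0 ≤ v) :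
    (1 + v) ^ p ≤ 1 + p * v * (1 + v) ^ p := by
  have hv1 : 0 < 1 + v := by positivity
  have h_neg : 1 - p * v ≤ (1 + v) ^ (-p) := calc
    1 - p * v ≤ 1 - p * Real.log (1 + v) := by
      gcongr
      linarith [Real.log_le_sub_one_of_pos hv1]
    _ ≤ Real.exp (-(p * Real.log (1 + v))) := Real.one_sub_le_exp_neg _
    _ = (1 + v) ^ (-p) := by rw [Real.rpow_def_of_pos hv1]; ring_nf
  have h_mul := mul_le_mul_of_nonneg_right h_neg (Real.rpow_nonneg hv1.le p)
  rw [← Real.rpow_add hv1, neg_add_cancel, Real.rpow_zero] at h_mul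
  linarith

lemma one_add_sq_rpow_le {p x : ℝ} (hp : 0 < p) (hx : 0 ≤ x) :
    (1 + (x / (6 * p)) ^ 2) ^ p ≤ 1 + 1 / (2 * p) * Real.exp (x / 2) := by
  have h_rpow : (1 + (x / (6 * p)) ^ 2) ^ p ≤ Real.exp (x / 6) := calc
    (1 + (x / (6 * p)) ^ 2) ^ p ≤ Real.exp (x / (6 * p)) ^ p := by
      gcongr
      exact one_add_sq_le_exp (by positivity)
    _ = Real.exp (x / 6) := by
      rw [← Real.exp_mul]
      field_simp
  have h_sq : x ^ 2 ≤ 18 * Real.exp (x / 3) := by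
    linarith [Real.pow_div_factorial_le_exp (x / 3) (by positivity) 2,
      show (x / 3) ^ 2 / (Nat.factorial 2 : ℝ) = x ^ 2 / 18 by norm_num [Nat.factorial]; ring]
  calc (1 + (x / (6 * p)) ^ 2) ^ p
      ≤ 1 + p * (x / (6 * p)) ^ 2 * (1 + (x / (6 * p)) ^ 2) ^ p :=
        one_add_rpow_le hp.le (sq_nonneg _)
    _ ≤ 1 + p * (x / (6 * p)) ^ 2 * Real.exp (x / 6) := by gcongr
    _ = 1 + 1 / (36 * p) * x ^ 2 * Real.exp (x / 6) := by field_simp; ring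
    _ ≤ 1 + 1 / (36 * p) * (18 * Real.exp (x / 3)) * Real.exp (x / 6) := by gcongr
    _ = 1 + 1 / (2 * p) * (Real.exp (x / 3) * Real.exp (x / 6)) := by ring
    _ = 1 + 1 / (2 * p) * Real.exp (x / 2) := by rw [← Real.exp_add]; ring_nf

lemma one_add_inv_pow_le {p : ℝ} (hp : 0 < p) (n : ℕ) :
    (1 + 1 / p) ^ n ≤ Real.exp (n / p ^ 2) ^ p := calc
  (1 + 1 / p) ^ n ≤ Real.exp (1 / p) ^ n := by
    gcongr
    linarith [Real.add_one_le_exp (1 / p)]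
  _ = Real.exp (n / p ^ 2) ^ p := by
    rw [← Real.exp_nat_mul, ← Real.exp_mul]
    field_simp

lemma sq_div_mul_exp_le {s p : ℝ} (hs : 0 < s) (hsp : s ≤ p) (K : ℝ) :
    K ^ 2 / (p / s) * (36 * p ^ 2 * Real.exp (s ^ 2 / p ^ 2)) ≤
      36 * K ^ 2 * Real.exp 1 * (s * p) := by
  have hp : 0 < p := hs.trans_le hsp
  have h_exp : Real.exp (s ^ 2 / p ^ 2) ≤ Real.exp 1 := by
    gcongr
    exact div_le_one_of_le₀ (by gcongr) (sq_nonneg p)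
  calc K ^ 2 / (p / s) * (36 * p ^ 2 * Real.exp (s ^ 2 / p ^ 2))
      ≤ K ^ 2 / (p / s) * (36 * p ^ 2 * Real.exp 1) := by gcongr
    _ = 36 * K ^ 2 * Real.exp 1 * (s * p) := by field_simp

lemma one_add_sum_le_prod_one_add {ι R : Type*} [CommSemiring R] [PartialOrder R]
    [IsOrderedRing R] (s : Finset ι) {f : ι → R} (hf : ∀ i ∈ s, 0 ≤ f i) :
    1 + ∑ i ∈ s, f i ≤ ∏ i ∈ s, (1 + f i) := by
  induction s using Finset.cons_induction with
  | empty => simp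
  | cons a s ha ih =>
    obtain ⟨hfa, hfs⟩ := Finset.forall_mem_cons ha _ |>.1 hf
    have h_sum : 0 ≤ ∑ i ∈ s, f i := Finset.sum_nonneg hfs
    rw [Finset.sum_cons, Finset.prod_cons]
    calc 1 + (f a + ∑ i ∈ s, f i)
        ≤ 1 + (f a + ∑ i ∈ s, f i) + f a * ∑ i ∈ s, f i :=
          le_add_of_nonneg_right (mul_nonneg hfa h_sum)
      _ = (1 + f a) * (1 + ∑ i ∈ s, f i) := by ring
      _ ≤ (1 + f a) * ∏ i ∈ s, (1 + f i) :=
          mul_le_mul_of_nonneg_left (ih hfs) (add_nonneg zero_le_one hfa)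

end RealInequalities

section Moments

variable {Ω : Type*} [MeasurableSpace Ω] {μ : Measure Ω}

lemma lpNormR_congr_ae {p : ℝ} {Y Z : Ω → ℝ} (h : Y =ᵐ[μ] Z) :
    lpNormR μ p Y = lpNormR μ p Z := by
  unfold lpNormR
  congr 1
  exact lintegral_congr_ae (h.mono fun ω hω ↦ by simp only [hω])

lemma lpNormR_const_mul {p : ℝ} (hp : 0 < p) (c : ℝ) (Z : Ω → ℝ) :
    lpNormR μ p (fun ω ↦ c * Z ω) = ENNReal.ofReal |c| * lpNormR μ p Z := by
  have h_root : ENNReal.ofReal (|c| ^ p) ^ (1 / p) = ENNReal.ofReal |c| := by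
    rw [← ENNReal.ofReal_rpow_of_nonneg (abs_nonneg c) hp.le, ← ENNReal.rpow_mul,
      mul_one_div_cancel hp.ne', ENNReal.rpow_one]
  have h_mul (ω : Ω) : ENNReal.ofReal (|c * Z ω| ^ p) =
      ENNReal.ofReal (|c| ^ p) * ENNReal.ofReal (|Z ω| ^ p) := by
    rw [abs_mul, Real.mul_rpow (abs_nonneg _) (abs_nonneg _), ENNReal.ofReal_mul (by positivity)]
  simp only [lpNormR, h_mul]
  rw [lintegral_const_mul' _ _ ENNReal.ofReal_ne_top,
    ENNReal.mul_rpow_of_nonneg _ _ (by positivity), h_root]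

lemma lintegral_exp_mul_sub_one_le_of_exp_tail {X : Ω → ℝ}
    (hX : AEMeasurable X μ) (hX0 : 0 ≤ᵐ[μ] X) {a b : ℝ} (ha : 0 ≤ a) (hab : a < b)
    (htail : ∀ t : ℝ, 0 < t → μ {ω | t ≤ X ω} ≤ ENNReal.ofReal (Real.exp (-b * t))) :
    ∫⁻ ω, ENNReal.ofReal (Real.exp (a * X ω) - 1) ∂μ ≤ ENNReal.ofReal (a / (b - a)) := by
  have h_neg : a - b < 0 := sub_neg.2 hab
  have h_cont : Continuous fun t : ℝ ↦ a * Real.exp (a * t) := by fun_prop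
  have h_ftc (x : ℝ) : ∫ t in (0 : ℝ)..x, a * Real.exp (a * t) = Real.exp (a * x) - 1 := by
    rw [intervalIntegral.integral_eq_sub_of_hasDerivAt (f := fun t ↦ Real.exp (a * t))
      (fun t _ ↦ by simpa [mul_comm] using ((hasDerivAt_id t).const_mul a).exp)
      (h_cont.intervalIntegrable 0 x)]
    simp
  calc ∫⁻ ω, ENNReal.ofReal (Real.exp (a * X ω) - 1) ∂μ
      = ∫⁻ t in Set.Ioi 0, μ {ω | t ≤ X ω} * ENNReal.ofReal (a * Real.exp (a * t)) := by
        simp only [← h_ftc]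
        exact lintegral_comp_eq_lintegral_meas_le_mul μ hX0 hX
          (fun t _ ↦ h_cont.intervalIntegrable 0 t) (ae_of_all _ fun t ↦ by positivity)
    _ ≤ ∫⁻ t in Set.Ioi 0, ENNReal.ofReal (a * Real.exp ((a - b) * t)) := by
        refine setLIntegral_mono (by fun_prop) fun t ht ↦ ?_
        grw [htail t ht]
        rw [← ENNReal.ofReal_mul (Real.exp_nonneg _), mul_left_comm, ← Real.exp_add, ← add_mul,
          neg_add_eq_sub]
    _ = ENNReal.ofReal (a / (b - a)) := by
        rw [← ofReal_integral_eq_lintegral_ofReal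
          ((integrableOn_exp_mul_Ioi h_neg 0).const_mul a) (ae_of_all _ fun t ↦ by positivity),
          integral_const_mul, integral_exp_mul_Ioi h_neg, mul_zero, Real.exp_zero,
          neg_div, ← div_neg, neg_sub, mul_one_div]

lemma lintegral_exp_mul_le_of_exp_tail [IsProbabilityMeasure μ] {X : Ω → ℝ}
    (hX : AEMeasurable X μ) (hX0 : 0 ≤ᵐ[μ] X) {a b : ℝ} (ha : 0 ≤ a) (hab : a < b)
    (htail : ∀ t : ℝ, 0 < t → μ {ω | t ≤ X ω} ≤ ENNReal.ofReal (Real.exp (-b * t))) :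
    ∫⁻ ω, ENNReal.ofReal (Real.exp (a * X ω)) ∂μ ≤ ENNReal.ofReal (b / (b - a)) := by
  have h_pos : 0 < b - a := sub_pos.2 hab
  calc ∫⁻ ω, ENNReal.ofReal (Real.exp (a * X ω)) ∂μ
      ≤ ∫⁻ ω, (ENNReal.ofReal (Real.exp (a * X ω) - 1) + 1) ∂μ := by
        refine lintegral_mono fun ω ↦ ?_
        simpa using ENNReal.ofReal_add_le (p := Real.exp (a * X ω) - 1) (q := 1)
    _ ≤ ENNReal.ofReal (a / (b - a)) + 1 := by
        rw [lintegral_add_right _ measurable_const, lintegral_one, measure_univ]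
        gcongr
        exact lintegral_exp_mul_sub_one_le_of_exp_tail hX hX0 ha hab htail
    _ = ENNReal.ofReal (b / (b - a)) := by
        rw [← ENNReal.ofReal_one, ← ENNReal.ofReal_add (by positivity) zero_le_one]
        congr 1
        field_simp
        ring

lemma lintegral_one_add_sq_rpow_le_of_exp_tail [IsProbabilityMeasure μ] {X : Ω → ℝ}
    (hX : AEMeasurable X μ) (hX0 : 0 ≤ᵐ[μ] X)
    (htail : ∀ t : ℝ, 0 < t → μ {ω | t ≤ X ω} ≤ ENNReal.ofReal (Real.exp (-t)))
    {p : ℝ} (hp : 0 < p) :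
    ∫⁻ ω, ENNReal.ofReal ((1 + (X ω / (6 * p)) ^ 2) ^ p) ∂μ ≤ ENNReal.ofReal (1 + 1 / p) := by
  have h_exp : ∫⁻ ω, ENNReal.ofReal (Real.exp (1 / 2 * X ω)) ∂μ ≤ ENNReal.ofReal 2 := by
    have h := lintegral_exp_mul_le_of_exp_tail hX hX0 (a := 1 / 2) (b := 1) (by norm_num)
      (by norm_num) (by simpa using htail)
    norm_num at h ⊢
    exact h
  calc ∫⁻ ω, ENNReal.ofReal ((1 + (X ω / (6 * p)) ^ 2) ^ p) ∂μ
      ≤ ∫⁻ ω, (1 + ENNReal.ofReal (1 / (2 * p)) * ENNReal.ofReal (Real.exp (1 / 2 * X ω))) ∂μ := by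
        refine lintegral_mono_ae (hX0.mono fun ω hω ↦ ?_)
        rw [← ENNReal.ofReal_mul (by positivity), ← ENNReal.ofReal_one,
          ← ENNReal.ofReal_add zero_le_one (by positivity), one_div_mul_eq_div 2 (X ω)]
        exact ENNReal.ofReal_le_ofReal (one_add_sq_rpow_le hp hω)
    _ ≤ 1 + ENNReal.ofReal (1 / (2 * p)) * ENNReal.ofReal 2 := by
        rw [lintegral_add_left measurable_const, lintegral_one, measure_univ,
          lintegral_const_mul' _ _ ENNReal.ofReal_ne_top]
        gcongr
    _ = ENNReal.ofReal (1 + 1 / p) := by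
        rw [← ENNReal.ofReal_mul (by positivity), ← ENNReal.ofReal_one,
          ← ENNReal.ofReal_add zero_le_one (by positivity)]
        congr 2
        field_simp

variable {ι : Type*} [Fintype ι]

lemma lintegral_one_add_sum_rpow_le_prod {Y : ι → Ω → ℝ} (hY : ∀ i, Measurable (Y i))
    (hY0 : ∀ i, 0 ≤ᵐ[μ] Y i) (hindep : iIndepFun Y μ) {p : ℝ} (hp : 0 ≤ p) :
    ∫⁻ ω, ENNReal.ofReal ((1 + ∑ i, Y i ω) ^ p) ∂μ ≤
      ∏ i, ∫⁻ ω, ENNReal.ofReal ((1 + Y i ω) ^ p) ∂μ := by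
  have hg : Measurable fun y : ℝ ↦ ENNReal.ofReal ((1 + y) ^ p) := by fun_prop
  calc ∫⁻ ω, ENNReal.ofReal ((1 + ∑ i, Y i ω) ^ p) ∂μ
      ≤ ∫⁻ ω, ∏ i, ENNReal.ofReal ((1 + Y i ω) ^ p) ∂μ := by
        refine lintegral_mono_ae ((ae_all_iff.2 hY0).mono fun ω hω ↦ ?_)
        have h_nonneg (i : ι) : 0 ≤ 1 + Y i ω := add_nonneg zero_le_one (hω i)
        rw [← ENNReal.ofReal_prod_of_nonneg fun i _ ↦ Real.rpow_nonneg (h_nonneg i) p,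
          Real.finsetProd_rpow _ _ fun i _ ↦ h_nonneg i]
        refine ENNReal.ofReal_le_ofReal (Real.rpow_le_rpow ?_ ?_ hp)
        · exact add_nonneg zero_le_one (Finset.sum_nonneg fun i _ ↦ hω i)
        · exact one_add_sum_le_prod_one_add _ fun i _ ↦ hω i
    _ = ∏ i, ∫⁻ ω, ENNReal.ofReal ((1 + Y i ω) ^ p) ∂μ :=
        lintegral_prod_eq_prod_lintegral_of_indepFun Finset.univ _
          (hindep.comp _ fun _ ↦ hg) fun i ↦ hg.comp (hY i)

lemma lintegral_one_add_sum_sq_rpow_le_of_exp_tail {X : ι → Ω → ℝ}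
    (hX : ∀ i, Measurable (X i)) (hX0 : ∀ i, 0 ≤ᵐ[μ] X i) (hindep : iIndepFun X μ)
    (htail : ∀ i, ∀ t : ℝ, 0 < t → μ {ω | t ≤ X i ω} ≤ ENNReal.ofReal (Real.exp (-t)))
    {p : ℝ} (hp : 0 < p) :
    ∫⁻ ω, ENNReal.ofReal ((1 + ∑ i, (X i ω / (6 * p)) ^ 2) ^ p) ∂μ ≤
      ENNReal.ofReal ((1 + 1 / p) ^ Fintype.card ι) := by
  have := hindep.isProbabilityMeasure
  have hg : Measurable fun x : ℝ ↦ (x / (6 * p)) ^ 2 := by fun_prop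
  calc ∫⁻ ω, ENNReal.ofReal ((1 + ∑ i, (X i ω / (6 * p)) ^ 2) ^ p) ∂μ
      ≤ ∏ i, ∫⁻ ω, ENNReal.ofReal ((1 + (X i ω / (6 * p)) ^ 2) ^ p) ∂μ :=
        lintegral_one_add_sum_rpow_le_prod (fun i ↦ hg.comp (hX i))
          (fun i ↦ ae_of_all _ fun ω ↦ sq_nonneg _) (hindep.comp _ fun _ ↦ hg) hp.le
    _ ≤ ∏ _i : ι, ENNReal.ofReal (1 + 1 / p) := by
        gcongr with i
        exact lintegral_one_add_sq_rpow_le_of_exp_tail (hX i).aemeasurable (hX0 i) (htail i) hp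
    _ = ENNReal.ofReal ((1 + 1 / p) ^ Fintype.card ι) := by
        rw [Finset.prod_const, Finset.card_univ, ENNReal.ofReal_pow (by positivity)]

lemma lpNormR_sum_sq_le_of_exp_tail {X : ι → Ω → ℝ}
    (hX : ∀ i, Measurable (X i)) (hX0 : ∀ i, 0 ≤ᵐ[μ] X i) (hindep : iIndepFun X μ)
    (htail : ∀ i, ∀ t : ℝ, 0 < t → μ {ω | t ≤ X i ω} ≤ ENNReal.ofReal (Real.exp (-t)))
    {p : ℝ} (hp : 0 < p) :
    lpNormR μ p (fun ω ↦ ∑ i, X i ω ^ 2) ≤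
      ENNReal.ofReal (36 * p ^ 2 * Real.exp (Fintype.card ι / p ^ 2)) := by
  have h_scale (ω : Ω) : ∑ i, X i ω ^ 2 = 36 * p ^ 2 * ∑ i, (X i ω / (6 * p)) ^ 2 := by
    rw [Finset.mul_sum]
    refine Finset.sum_congr rfl fun i _ ↦ ?_
    field_simp
    norm_num
  have h_moment : ∫⁻ ω, ENNReal.ofReal (|∑ i, (X i ω / (6 * p)) ^ 2| ^ p) ∂μ ≤
      ENNReal.ofReal (Real.exp (Fintype.card ι / p ^ 2)) ^ p := calc
    ∫⁻ ω, ENNReal.ofReal (|∑ i, (X i ω / (6 * p)) ^ 2| ^ p) ∂μ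
      ≤ ∫⁻ ω, ENNReal.ofReal ((1 + ∑ i, (X i ω / (6 * p)) ^ 2) ^ p) ∂μ := by
        gcongr with ω
        rw [abs_of_nonneg (Finset.sum_nonneg fun i _ ↦ sq_nonneg _)]
        exact le_add_of_nonneg_left zero_le_one
    _ ≤ ENNReal.ofReal ((1 + 1 / p) ^ Fintype.card ι) :=
        lintegral_one_add_sum_sq_rpow_le_of_exp_tail hX hX0 hindep htail hp
    _ ≤ ENNReal.ofReal (Real.exp (Fintype.card ι / p ^ 2)) ^ p := by
        rw [ENNReal.ofReal_rpow_of_nonneg (Real.exp_nonneg _) hp.le]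
        exact ENNReal.ofReal_le_ofReal (one_add_inv_pow_le hp _)
  simp only [h_scale]
  rw [lpNormR_const_mul hp, abs_of_nonneg (by positivity),
    ENNReal.ofReal_mul (p := 36 * p ^ 2) (by positivity)]
  gcongr
  rwa [lpNormR, one_div, ENNReal.rpow_inv_le_iff hp]

theorem moment_sum_w_conf_general {W : ι → Ω → ℝ}
    (hW : ∀ i, Measurable (W i)) (hW0 : ∀ i, 0 ≤ᵐ[μ] W i) (hindep : iIndepFun W μ)
    {c K : ℝ} (hc : 0 < c) (hK : 0 < K)
    (htail : ∀ i, ∀ t : ℝ, 0 < t →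
      μ {ω | t ^ 2 ≤ c * W i ω} ≤ ENNReal.ofReal (Real.exp (-t / K)))
    {p : ℝ} (hp : 0 < p) :
    lpNormR μ p (fun ω ↦ ∑ i, W i ω) ≤
      ENNReal.ofReal (K ^ 2 / c * (36 * p ^ 2 * Real.exp (Fintype.card ι / p ^ 2))) := by
  set X : ι → Ω → ℝ := fun i ω ↦ √(c * W i ω) / K
  have hg : Measurable fun w : ℝ ↦ √(c * w) / K := by fun_prop
  have h_sq : (fun ω ↦ ∑ i, W i ω) =ᵐ[μ] fun ω ↦ K ^ 2 / c * ∑ i, X i ω ^ 2 := by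
    filter_upwards [ae_all_iff.2 hW0] with ω hω
    rw [Finset.mul_sum]
    refine Finset.sum_congr rfl fun i _ ↦ ?_
    rw [div_pow, Real.sq_sqrt (mul_nonneg hc.le (hω i))]
    field_simp
  have hX_tail (i : ι) (t : ℝ) (ht : 0 < t) :
      μ {ω | t ≤ X i ω} ≤ ENNReal.ofReal (Real.exp (-t)) := by
    have h_set : {ω | t ≤ X i ω} = {ω | (t * K) ^ 2 ≤ c * W i ω} := by
      ext ω
      simp only [X, Set.mem_ofPred_eq, le_div_iff₀ hK, Real.le_sqrt' (mul_pos ht hK)]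
    have h := htail i (t * K) (mul_pos ht hK)
    rwa [← h_set, ← neg_mul, mul_div_cancel_right₀ _ hK.ne'] at h
  rw [lpNormR_congr_ae h_sq, lpNormR_const_mul hp, abs_of_nonneg (by positivity),
    ENNReal.ofReal_mul (p := K ^ 2 / c) (by positivity)]
  gcongr
  exact lpNormR_sum_sq_le_of_exp_tail (fun i ↦ hg.comp (hW i))
    (fun i ↦ ae_of_all _ fun ω ↦ div_nonneg (Real.sqrt_nonneg _) hK.le)
    (hindep.comp _ fun _ ↦ hg) hX_tail hp

end Moments

/-- Each `W j` is distributed as `W / λ` with `λ = p / √d`, where `W` has tail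
`P(W ≥ t²) = e^{-t/14}`; equivalently `λ · W j` has that tail. -/
theorem moment_sum_w_conf {Ω : Type*} [MeasurableSpace Ω]
    (μ : Measure Ω) [IsProbabilityMeasure μ]
    (d : ℕ) (hd : 1 ≤ d)
    (p : ℝ) (hp : Real.sqrt d ≤ p)
    (W : Fin d → Ω → ℝ) (hWmeas : ∀ j, Measurable (W j)) (hWnn : ∀ j ω, 0 ≤ W j ω)
    (hindep : iIndepFun W μ)
    (hWtail : ∀ j, ∀ t : ℝ, 0 ≤ t →
      μ {ω | t ^ 2 ≤ (p / Real.sqrt d) * W j ω} = ENNReal.ofReal (Real.exp (-t / 14))) :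
    lpNormR μ p (fun ω => ∑ j, W j ω) ≤
      ENNReal.ofReal (91190 * Real.sqrt d * p) := by
  have hs : 0 < √(d : ℝ) := Real.sqrt_pos.2 (by exact_mod_cast hd)
  have hp0 : 0 < p := hs.trans_le hp
  refine (moment_sum_w_conf_general hWmeas (fun j ↦ ae_of_all _ (hWnn j)) hindep
    (div_pos hp0 hs) (by norm_num) (fun j t ht ↦ (hWtail j t ht.le).le) hp0).trans
    (ENNReal.ofReal_le_ofReal ?_)
  have h_bound := sq_div_mul_exp_le hs hp 14
  rw [Real.sq_sqrt (Nat.cast_nonneg d)] at h_bound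
  rw [Fintype.card_fin]
  nlinarith [mul_pos hs hp0, Real.exp_one_lt_d9]
end
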